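/- Two binary qubit observables with effects E₁ = (1/2)((1+w₁)I + m₁·σ) and E₂ = (1/2)((1+w₂)I + m₂·σ) (together with their complements) are compatible if and only if (1 − F₁² − F₂²)(1 − w₁²/F₁² − w₂²/F₂²) ≤ (m₁·m₂ − w₁w₂)², where F_j = (1/2)(√((1+w_j)² − |m_j|²) + √((1−w_j)² − |m_j|²)). -/

import Mathlib

open Matrix ComplexOrder RealInnerProductSpace

noncomputable section

abbrev Mat2 := Matrix (Fin 2) (Fin 2) ℂ

def sigma1 : Mat2 := !![0, 1; 1, 0]
def sigma2 : Mat2 := !![0, -Complex.I; Complex.I, 0]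
def sigma3 : Mat2 := !![1, 0; 0, -1]

def pauliDot (a : EuclideanSpace ℝ (Fin 3)) : Mat2 :=
  (a 0 : ℂ) • sigma1 + (a 1 : ℂ) • sigma2 + (a 2 : ℂ) • sigma3

/-- The effect `E = (1/2)((1+w)I + m·σ)`. -/
def biasedEffect (w : ℝ) (m : EuclideanSpace ℝ (Fin 3)) : Mat2 :=
  ((1 : ℂ) / 2) • (((1 + w : ℝ) : ℂ) • (1 : Mat2) + pauliDot m)

/-- The binary observable `(E, I − E)`, `true` ↦ `E`. -/
def biasedObs (w : ℝ) (m : EuclideanSpace ℝ (Fin 3)) (s : Bool) : Mat2 :=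
  if s then biasedEffect w m else (1 : Mat2) - biasedEffect w m

def IsPOVM {ι : Type*} [Fintype ι] {n : Type*} [Fintype n] [DecidableEq n]
    (G : ι → Matrix n n ℂ) : Prop :=
  (∀ i, (G i).PosSemidef) ∧ ∑ i, G i = 1

/-- The quantity `F = (1/2)(√((1+w)² − |m|²) + √((1−w)² − |m|²))`. -/
def Fquant (w : ℝ) (m : EuclideanSpace ℝ (Fin 3)) : ℝ :=
  (Real.sqrt ((1 + w) ^ 2 - ‖m‖ ^ 2) + Real.sqrt ((1 - w) ^ 2 - ‖m‖ ^ 2)) / 2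

abbrev V3 := EuclideanSpace ℝ (Fin 3)

def Feas (w₁ w₂ : ℝ) (m₁ m₂ : V3) : Prop :=
  ∃ (Z : ℝ) (z : V3), ‖z + (m₁ + m₂)‖ ≤ 1 + Z + (w₁ + w₂) ∧ ‖z - (m₁ + m₂)‖ ≤ 1 + Z - (w₁ + w₂) ∧
    ‖z - (m₁ - m₂)‖ ≤ 1 - Z + (w₁ - w₂) ∧ ‖z + (m₁ - m₂)‖ ≤ 1 - Z - (w₁ - w₂)

lemma nsq (c x y : ℝ) (z m₁ m₂ : V3) : ‖c • z + x • m₁ + y • m₂‖ ^ 2 =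
    c ^ 2 * ‖z‖ ^ 2 + x ^ 2 * ‖m₁‖ ^ 2 + y ^ 2 * ‖m₂‖ ^ 2 + 2 * c * x * ⟪z, m₁⟫ + 2 * c * y * ⟪z, m₂⟫
      + 2 * x * y * ⟪m₁, m₂⟫ := by
  rw [norm_add_sq_real, norm_add_sq_real]
  simp only [norm_smul, inner_add_left, real_inner_smul_left, real_inner_smul_right, mul_pow,
    Real.norm_eq_abs, sq_abs]
  ring

/-- positivity of the weights -/
lemma Lpos (w₁ w₂ a b g n₁ n₂ P₁ P₂ Q₁ Q₂ : ℝ)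
    (hP₁ : P₁ = (1 + w₁) ^ 2 - a) (hP₂ : P₂ = (1 + w₂) ^ 2 - b)
    (hQ₁ : Q₁ = (1 - w₁) ^ 2 - a) (hQ₂ : Q₂ = (1 - w₂) ^ 2 - b)
    (hn₁ : n₁ = a + b - 2 * g - (w₁ - w₂) ^ 2) (hn₂ : n₂ = a + b + 2 * g - (w₁ + w₂) ^ 2)
    (P₁0 : 0 ≤ P₁) (P₂0 : 0 ≤ P₂) (Q₁0 : 0 ≤ Q₁) (Q₂0 : 0 ≤ Q₂) (h1 : 0 < n₁)
    (h : P₁ * Q₁ + P₂ * Q₂ < n₁ * n₂) :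
    0 < (1 - (g - w₁ * w₂)) * (a * b - g ^ 2)
      + (1 - w₁) * (-(w₂ + (g - w₁ * w₂) * w₁) * b + (w₁ + (g - w₁ * w₂) * w₂) * g)
      + (1 - w₂) * (-(w₁ + (g - w₁ * w₂) * w₂) * a + (w₂ + (g - w₁ * w₂) * w₁) * g) := by
  have key : 8 * ((1 - (g - w₁ * w₂)) * (a * b - g ^ 2)
      + (1 - w₁) * (-(w₂ + (g - w₁ * w₂) * w₁) * b + (w₁ + (g - w₁ * w₂) * w₂) * g)
      + (1 - w₂) * (-(w₁ + (g - w₁ * w₂) * w₂) * a + (w₂ + (g - w₁ * w₂) * w₁) * g)) =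
      (n₁ + Q₁ + Q₂) * (n₁ * n₂ - (P₁ * Q₁ + P₂ * Q₂)) + 2 * (Q₁ * Q₂) * (n₁ + P₁ + P₂) := by
    subst hP₁ hP₂ hQ₁ hQ₂ hn₁ hn₂; ring
  have : 0 < (n₁ + Q₁ + Q₂) * (n₁ * n₂ - (P₁ * Q₁ + P₂ * Q₂)) :=
    mul_pos (by linarith) (by linarith)
  have : 0 ≤ 2 * (Q₁ * Q₂) * (n₁ + P₁ + P₂) := by positivity
  linarith

/-- key determinant identity -/
lemma nu_id (w₁ w₂ a b g n₁ n₂ p₁ p₂ q₁ q₂ x y : ℝ)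
    (hp₁ : p₁ ^ 2 = (1 + w₁) ^ 2 - a) (hp₂ : p₂ ^ 2 = (1 + w₂) ^ 2 - b)
    (hq₁ : q₁ ^ 2 = (1 - w₁) ^ 2 - a) (hq₂ : q₂ ^ 2 = (1 - w₂) ^ 2 - b)
    (hn₁ : n₁ = a + b - 2 * g - (w₁ - w₂) ^ 2) (hn₂ : n₂ = a + b + 2 * g - (w₁ + w₂) ^ 2)
    (hx : (a * b - g ^ 2) * x = -(w₂ + (g - w₁ * w₂) * w₁) * b + (w₁ + (g - w₁ * w₂) * w₂) * g)
    (hy : (a * b - g ^ 2) * y = -(w₁ + (g - w₁ * w₂) * w₂) * a + (w₂ + (g - w₁ * w₂) * w₁) * g) :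
    16 * ((1 + (g - w₁ * w₂) ^ 2 + w₁ ^ 2 + w₂ ^ 2 - a - b
      + x * (w₂ + (g - w₁ * w₂) * w₁) + y * (w₁ + (g - w₁ * w₂) * w₂)) * (a * b - g ^ 2)) =
    -(((p₁ * q₁ + p₂ * q₂) ^ 2 - n₁ * n₂) * ((p₁ * q₁ - p₂ * q₂) ^ 2 - n₁ * n₂)) := by
  have e : ((p₁ * q₁ + p₂ * q₂) ^ 2 - n₁ * n₂) * ((p₁ * q₁ - p₂ * q₂) ^ 2 - n₁ * n₂) =
      (p₁ ^ 2 * q₁ ^ 2 + p₂ ^ 2 * q₂ ^ 2 - n₁ * n₂) ^ 2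
        - 4 * (p₁ ^ 2 * q₁ ^ 2) * (p₂ ^ 2 * q₂ ^ 2) := by ring
  rw [e, hp₁, hp₂, hq₁, hq₂, hn₁, hn₂]
  linear_combination 16 * (w₂ + (g - w₁ * w₂) * w₁) * hx + 16 * (w₁ + (g - w₁ * w₂) * w₂) * hy

lemma case_max (p q r s n₁ n₂ : ℝ) (hp : 0 ≤ p) (hq : 0 ≤ q) (hr : 0 ≤ r) (hs : 0 ≤ s)
    (h1 : q ≤ p) (h2 : r ≤ p) (h3 : s ≤ p) (hn₁ : n₁ < 0) (hn₂ : n₂ < 0)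
    (a1 : -n₁ ≤ (q - s) ^ 2) (a2 : -n₂ ≤ (q - r) ^ 2) : n₁ * n₂ ≤ (p * q + r * s) ^ 2 := by
  have : n₁ * n₂ ≤ (q - s) ^ 2 * (q - r) ^ 2 := by
    have := mul_le_mul a1 a2 (by linarith) (by positivity)
    linarith
  refine this.trans ?_
  rw [← mul_pow]
  apply sq_le_sq'
  · rcases le_total s q with h | h
    · nlinarith [mul_nonneg hr hs, mul_nonneg hq hr, mul_nonneg hq hs, mul_nonneg hq (sub_nonneg.2 h2), mul_nonneg hq (sub_nonneg.2 h)]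
    · rcases le_total r q with h' | h'
      · nlinarith [mul_nonneg hr hs, mul_nonneg hq (sub_nonneg.2 h3), mul_nonneg hq (sub_nonneg.2 h')]
      · nlinarith [mul_nonneg hr hs, mul_nonneg hp hq, mul_nonneg (sub_nonneg.2 h) (sub_nonneg.2 h')]
  · nlinarith [mul_nonneg hq (sub_nonneg.2 h1), mul_nonneg hq hr, mul_nonneg hq hs]

/-- reverse Cauchy-Schwarz -/
lemma rev_cs (α β a b g q r : ℝ) (hα : 0 ≤ α) (hβ : 0 ≤ β) (hq : 0 ≤ q) (hr : 0 ≤ r)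
    (h1 : q ^ 2 = α ^ 2 - a) (h2 : r ^ 2 = β ^ 2 - b) (a0 : 0 ≤ a) (b0 : 0 ≤ b)
    (hg : g ^ 2 ≤ a * b) : q * r ≤ α * β - g := by
  have e1 : q ≤ α := by nlinarith
  have e2 : r ≤ β := by nlinarith
  have e3 : q * r ≤ α * β := mul_le_mul e1 e2 hr hα
  have : |g| ≤ |α * β - q * r| := by
    apply sq_le_sq.1
    have ha : a = α ^ 2 - q ^ 2 := by linarith
    have hb : b = β ^ 2 - r ^ 2 := by linarith
    rw [ha, hb] at hg
    nlinarith [sq_nonneg (α * r - β * q)]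
  rw [abs_of_nonneg (sub_nonneg.2 e3)] at this
  linarith [le_abs_self g]

lemma neg_case (w₁ w₂ a b g n₁ n₂ p₁ p₂ q₁ q₂ : ℝ)
    (hp₁ : p₁ ^ 2 = (1 + w₁) ^ 2 - a) (hp₂ : p₂ ^ 2 = (1 + w₂) ^ 2 - b)
    (hq₁ : q₁ ^ 2 = (1 - w₁) ^ 2 - a) (hq₂ : q₂ ^ 2 = (1 - w₂) ^ 2 - b)
    (hn₁ : n₁ = a + b - 2 * g - (w₁ - w₂) ^ 2) (hn₂ : n₂ = a + b + 2 * g - (w₁ + w₂) ^ 2)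
    (p₁0 : 0 ≤ p₁) (p₂0 : 0 ≤ p₂) (q₁0 : 0 ≤ q₁) (q₂0 : 0 ≤ q₂)
    (hw₁ : |w₁| ≤ 1) (hw₂ : |w₂| ≤ 1) (a0 : 0 ≤ a) (b0 : 0 ≤ b) (hg : g ^ 2 ≤ a * b)
    (h1 : n₁ < 0) (h2 : n₂ < 0) : n₁ * n₂ ≤ (p₁ * q₁ + p₂ * q₂) ^ 2 := by
  obtain ⟨u1, u2⟩ := abs_le.1 hw₁
  obtain ⟨v1, v2⟩ := abs_le.1 hw₂
  have hg' : (-g) ^ 2 ≤ a * b := by rwa [neg_sq]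
  have c1 := rev_cs (1 + w₁) (1 + w₂) a b g p₁ p₂ (by linarith) (by linarith) p₁0 p₂0 hp₁ hp₂ a0 b0 hg
  have c2 := rev_cs (1 - w₁) (1 - w₂) a b g q₁ q₂ (by linarith) (by linarith) q₁0 q₂0 hq₁ hq₂ a0 b0 hg
  have c3 := rev_cs (1 + w₁) (1 - w₂) a b (-g) p₁ q₂ (by linarith) (by linarith) p₁0 q₂0 hp₁ hq₂ a0 b0 hg'
  have c4 := rev_cs (1 - w₁) (1 + w₂) a b (-g) q₁ p₂ (by linarith) (by linarith) q₁0 p₂0 hq₁ hp₂ a0 b0 hg'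
  have d1 : -n₁ ≤ (p₁ - p₂) ^ 2 := by nlinarith
  have d2 : -n₁ ≤ (q₁ - q₂) ^ 2 := by nlinarith
  have d3 : -n₂ ≤ (p₁ - q₂) ^ 2 := by nlinarith
  have d4 : -n₂ ≤ (q₁ - p₂) ^ 2 := by nlinarith
  have sw : ∀ x y : ℝ, (x - y) ^ 2 = (y - x) ^ 2 := fun x y => by ring
  have A : ∃ t, (p₁ ≤ t ∧ q₁ ≤ t ∧ p₂ ≤ t ∧ q₂ ≤ t) ∧ (t = p₁ ∨ t = q₁ ∨ t = p₂ ∨ t = q₂) := by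
    refine ⟨max (max p₁ q₁) (max p₂ q₂), by simp, ?_⟩
    rcases max_choice (max p₁ q₁) (max p₂ q₂) with h | h <;> rw [h]
    · rcases max_choice p₁ q₁ with h | h <;> simp [h]
    · rcases max_choice p₂ q₂ with h | h <;> simp [h]
  obtain ⟨t, ⟨t1, t2, t3, t4⟩, rfl | rfl | rfl | rfl⟩ := A
  · exact case_max t q₁ p₂ q₂ n₁ n₂ p₁0 q₁0 p₂0 q₂0 t2 t3 t4 h1 h2 d2 d4
  · have := case_max t p₁ q₂ p₂ n₁ n₂ q₁0 p₁0 q₂0 p₂0 t1 t4 t3 h1 h2 d1 d3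
    linarith [show (p₁ * t + p₂ * q₂) ^ 2 = (t * p₁ + q₂ * p₂) ^ 2 by ring]
  · have := case_max t q₂ p₁ q₁ n₁ n₂ p₂0 q₂0 p₁0 q₁0 t4 t1 t2 h1 h2 (by rwa [sw]) (by rwa [sw])
    linarith [show (p₁ * q₁ + t * q₂) ^ 2 = (t * q₂ + p₁ * q₁) ^ 2 by ring]
  · have := case_max t p₂ q₁ p₁ n₁ n₂ q₂0 p₂0 q₁0 p₁0 t3 t2 t1 h1 h2 (by rwa [sw]) (by rwa [sw])
    linarith [show (p₁ * q₁ + p₂ * t) ^ 2 = (t * p₂ + q₁ * p₁) ^ 2 by ring]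

lemma scalar_witness (w₁ w₂ a b g Z n₁ n₂ p₁ p₂ q₁ q₂ : ℝ) (hZ : g = Z + w₁ * w₂)
    (hp₁ : p₁ ^ 2 = (1 + w₁) ^ 2 - a) (hp₂ : p₂ ^ 2 = (1 + w₂) ^ 2 - b)
    (hq₁ : q₁ ^ 2 = (1 - w₁) ^ 2 - a) (hq₂ : q₂ ^ 2 = (1 - w₂) ^ 2 - b)
    (hn₁ : n₁ = a + b - 2 * g - (w₁ - w₂) ^ 2) (hn₂ : n₂ = a + b + 2 * g - (w₁ + w₂) ^ 2)
    (p₁0 : 0 ≤ p₁) (p₂0 : 0 ≤ p₂) (q₁0 : 0 ≤ q₁) (q₂0 : 0 ≤ q₂)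
    (h1 : 0 < n₁) (h2 : 0 < n₂) (hcon : (p₁ * q₁ + p₂ * q₂) ^ 2 < n₁ * n₂) :
    ∃ x y : ℝ, a * x + g * y + w₂ + Z * w₁ = 0 ∧ g * x + b * y + w₁ + Z * w₂ = 0 ∧
      1 + Z ^ 2 + w₁ ^ 2 + w₂ ^ 2 - a - b + x * (w₂ + Z * w₁) + y * (w₁ + Z * w₂) < 0 ∧
      0 < 1 - Z - x * w₁ - y * w₂ + x + y ∧ 0 < 1 - Z - x * w₁ - y * w₂ - x - y ∧
      0 < 1 + Z + x * w₁ + y * w₂ + y - x ∧ 0 < 1 + Z + x * w₁ + y * w₂ - y + x := by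
  obtain rfl : Z = g - w₁ * w₂ := by linarith
  have hW : p₁ ^ 2 * q₁ ^ 2 + p₂ ^ 2 * q₂ ^ 2 ≤ (p₁ * q₁ + p₂ * q₂) ^ 2 := by
    have := mul_nonneg (mul_nonneg p₁0 q₁0) (mul_nonneg p₂0 q₂0)
    linarith [show (p₁ * q₁ + p₂ * q₂) ^ 2 = p₁ ^ 2 * q₁ ^ 2 + p₂ ^ 2 * q₂ ^ 2 + 2 * (p₁ * q₁ * (p₂ * q₂)) by ring]
  have hW' := lt_of_le_of_lt hW hcon
  have L1 := Lpos w₁ w₂ a b g n₁ n₂ (p₁ ^ 2) (p₂ ^ 2) (q₁ ^ 2) (q₂ ^ 2) hp₁ hp₂ hq₁ hq₂ hn₁ hn₂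
    (sq_nonneg _) (sq_nonneg _) (sq_nonneg _) (sq_nonneg _) h1 hW'
  have L4 := Lpos (-w₁) (-w₂) a b g n₁ n₂ (q₁ ^ 2) (q₂ ^ 2) (p₁ ^ 2) (p₂ ^ 2) (by linarith) (by linarith)
    (by linarith) (by linarith) (by linarith) (by linarith)
    (sq_nonneg _) (sq_nonneg _) (sq_nonneg _) (sq_nonneg _) h1 (by linarith)
  have L2 := Lpos w₁ (-w₂) a b (-g) n₂ n₁ (p₁ ^ 2) (q₂ ^ 2) (q₁ ^ 2) (p₂ ^ 2) hp₁ (by linarith)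
    hq₁ (by linarith) (by linarith) (by linarith)
    (sq_nonneg _) (sq_nonneg _) (sq_nonneg _) (sq_nonneg _) h2 (by linarith)
  have L3 := Lpos (-w₁) w₂ a b (-g) n₂ n₁ (q₁ ^ 2) (p₂ ^ 2) (p₁ ^ 2) (q₂ ^ 2) (by linarith) hp₂
    (by linarith) hq₂ (by linarith) (by linarith)
    (sq_nonneg _) (sq_nonneg _) (sq_nonneg _) (sq_nonneg _) h2 (by linarith)
  have hdet : 0 < a * b - g ^ 2 := by
    have h4 : 0 < 4 * (a * b - g ^ 2) :=
      lt_of_lt_of_eq (add_pos (add_pos L1 L4) (add_pos L2 L3)) (by ring)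
    linarith
  obtain ⟨x, hx⟩ : ∃ x, (a * b - g ^ 2) * x = -(w₂ + (g - w₁ * w₂) * w₁) * b + (w₁ + (g - w₁ * w₂) * w₂) * g :=
    ⟨_, mul_div_cancel₀ _ hdet.ne'⟩
  obtain ⟨y, hy⟩ : ∃ y, (a * b - g ^ 2) * y = -(w₁ + (g - w₁ * w₂) * w₂) * a + (w₂ + (g - w₁ * w₂) * w₁) * g :=
    ⟨_, mul_div_cancel₀ _ hdet.ne'⟩
  have e1 : a * x + g * y + w₂ + (g - w₁ * w₂) * w₁ = 0 := by
    apply mul_left_cancel₀ hdet.ne'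
    linear_combination a * hx + g * hy
  have e2 : g * x + b * y + w₁ + (g - w₁ * w₂) * w₂ = 0 := by
    apply mul_left_cancel₀ hdet.ne'
    linear_combination g * hx + b * hy
  have hid := nu_id w₁ w₂ a b g n₁ n₂ p₁ p₂ q₁ q₂ x y hp₁ hp₂ hq₁ hq₂ hn₁ hn₂ hx hy
  have hνneg : 1 + (g - w₁ * w₂) ^ 2 + w₁ ^ 2 + w₂ ^ 2 - a - b + x * (w₂ + (g - w₁ * w₂) * w₁) + y * (w₁ + (g - w₁ * w₂) * w₂) < 0 := by
    have k1 : (p₁ * q₁ - p₂ * q₂) ^ 2 ≤ (p₁ * q₁ + p₂ * q₂) ^ 2 := by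
      have := mul_nonneg (mul_nonneg p₁0 q₁0) (mul_nonneg p₂0 q₂0)
      linarith [show (p₁ * q₁ + p₂ * q₂) ^ 2 - (p₁ * q₁ - p₂ * q₂) ^ 2 = 4 * (p₁ * q₁ * (p₂ * q₂)) by ring]
    have : 0 < ((p₁ * q₁ + p₂ * q₂) ^ 2 - n₁ * n₂) * ((p₁ * q₁ - p₂ * q₂) ^ 2 - n₁ * n₂) :=
      mul_pos_of_neg_of_neg (by linarith) (by linarith)
    by_contra! hh
    have := mul_nonneg hh hdet.le
    linarith
  have l1 : 0 < 1 - (g - w₁ * w₂) - x * w₁ - y * w₂ + x + y := by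
    refine (mul_pos_iff_of_pos_left hdet).1 ?_
    refine lt_of_lt_of_eq L1 ?_
    linear_combination -(1 - w₁) * hx - (1 - w₂) * hy
  have l4 : 0 < 1 - (g - w₁ * w₂) - x * w₁ - y * w₂ - x - y := by
    refine (mul_pos_iff_of_pos_left hdet).1 ?_
    refine lt_of_lt_of_eq L4 ?_
    linear_combination (1 + w₁) * hx + (1 + w₂) * hy
  have l2 : 0 < 1 + (g - w₁ * w₂) + x * w₁ + y * w₂ + y - x := by
    refine (mul_pos_iff_of_pos_left hdet).1 ?_
    refine lt_of_lt_of_eq L2 ?_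
    linear_combination (1 - w₁) * hx - (1 + w₂) * hy
  have l3 : 0 < 1 + (g - w₁ * w₂) + x * w₁ + y * w₂ - y + x := by
    refine (mul_pos_iff_of_pos_left hdet).1 ?_
    refine lt_of_lt_of_eq L3 ?_
    linear_combination -(1 + w₁) * hx + (1 - w₂) * hy
  exact ⟨x, y, e1, e2, hνneg, l1, l4, l2, l3⟩

lemma necessity (w₁ w₂ : ℝ) (m₁ m₂ : V3) (n₁ n₂ p₁ p₂ q₁ q₂ : ℝ)
    (hp₁ : p₁ ^ 2 = (1 + w₁) ^ 2 - ‖m₁‖ ^ 2) (hp₂ : p₂ ^ 2 = (1 + w₂) ^ 2 - ‖m₂‖ ^ 2)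
    (hq₁ : q₁ ^ 2 = (1 - w₁) ^ 2 - ‖m₁‖ ^ 2) (hq₂ : q₂ ^ 2 = (1 - w₂) ^ 2 - ‖m₂‖ ^ 2)
    (hn₁ : n₁ = ‖m₁‖ ^ 2 + ‖m₂‖ ^ 2 - 2 * ⟪m₁, m₂⟫ - (w₁ - w₂) ^ 2)
    (hn₂ : n₂ = ‖m₁‖ ^ 2 + ‖m₂‖ ^ 2 + 2 * ⟪m₁, m₂⟫ - (w₁ + w₂) ^ 2)
    (p₁0 : 0 ≤ p₁) (p₂0 : 0 ≤ p₂) (q₁0 : 0 ≤ q₁) (q₂0 : 0 ≤ q₂)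
    (hw₁ : |w₁| ≤ 1) (hw₂ : |w₂| ≤ 1) (hF : Feas w₁ w₂ m₁ m₂) :
    n₁ * n₂ ≤ (p₁ * q₁ + p₂ * q₂) ^ 2 := by
  by_contra! hcon
  have hg : ⟪m₁, m₂⟫ ^ 2 ≤ ‖m₁‖ ^ 2 * ‖m₂‖ ^ 2 := by
    rw [← mul_pow]; exact sq_le_sq' (by linarith [neg_le_of_abs_le (abs_real_inner_le_norm m₁ m₂)]) (real_inner_le_norm m₁ m₂)
  have hpos : 0 < n₁ * n₂ := lt_of_le_of_lt (sq_nonneg _) hcon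
  rcases pos_and_pos_or_neg_and_neg_of_mul_pos hpos with ⟨h1, h2⟩ | ⟨h1, h2⟩
  swap
  · exact absurd (neg_case w₁ w₂ _ _ _ n₁ n₂ p₁ p₂ q₁ q₂ hp₁ hp₂ hq₁ hq₂ hn₁ hn₂ p₁0 p₂0 q₁0 q₂0
      hw₁ hw₂ (sq_nonneg _) (sq_nonneg _) hg h1 h2) (not_le.2 hcon)
  obtain ⟨Z', z', f1, f2, f3, f4⟩ := hF
  have s1 := pow_le_pow_left₀ (norm_nonneg _) f1 2
  have s2 := pow_le_pow_left₀ (norm_nonneg _) f2 2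
  have s3 := pow_le_pow_left₀ (norm_nonneg _) f3 2
  have s4 := pow_le_pow_left₀ (norm_nonneg _) f4 2
  rw [show z' + (m₁ + m₂) = (1:ℝ) • z' + (1:ℝ) • m₁ + (1:ℝ) • m₂ by module, nsq] at s1
  rw [show z' - (m₁ + m₂) = (1:ℝ) • z' + (-1:ℝ) • m₁ + (-1:ℝ) • m₂ by module, nsq] at s2
  rw [show z' - (m₁ - m₂) = (1:ℝ) • z' + (-1:ℝ) • m₁ + (1:ℝ) • m₂ by module, nsq] at s3
  rw [show z' + (m₁ - m₂) = (1:ℝ) • z' + (1:ℝ) • m₁ + (-1:ℝ) • m₂ by module, nsq] at s4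
  set a := ‖m₁‖ ^ 2 with ha
  set b := ‖m₂‖ ^ 2 with hb
  set g := ⟪m₁, m₂⟫ with hgdef
  obtain ⟨Z, hZ⟩ : ∃ Z, g = Z + w₁ * w₂ := ⟨g - w₁ * w₂, by ring⟩
  obtain ⟨x, y, e1, e2, hνneg, l1, l4, l2, l3⟩ := scalar_witness w₁ w₂ a b g Z n₁ n₂ p₁ p₂ q₁ q₂ hZ
    hp₁ hp₂ hq₁ hq₂ hn₁ hn₂ p₁0 p₂0 q₁0 q₂0 h1 h2 hcon
  obtain ⟨ν, hν⟩ : ∃ ν, ν = 1 + Z ^ 2 + w₁ ^ 2 + w₂ ^ 2 - a - b + x * (w₂ + Z * w₁) + y * (w₁ + Z * w₂) :=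
    ⟨_, rfl⟩
  rw [← hν] at hνneg
  obtain ⟨z, hz⟩ : ∃ z, z = -(x • m₁ + y • m₂) := ⟨_, rfl⟩
  have hζ : ‖z' - z‖ ^ 2 = ‖z'‖ ^ 2 + x ^ 2 * a + y ^ 2 * b + 2 * x * ⟪z', m₁⟫ + 2 * y * ⟪z', m₂⟫
      + 2 * x * y * g := by
    rw [hz, show z' - -(x • m₁ + y • m₂) = (1:ℝ) • z' + x • m₁ + y • m₂ by module, nsq]; ring
  have hY : 0 ≤ 4 * (ν + (Z' - Z) ^ 2 - ‖z' - z‖ ^ 2) := by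
    have t1 := mul_nonneg l1.le (sub_nonneg.2 s1)
    have t4 := mul_nonneg l4.le (sub_nonneg.2 s2)
    have t2 := mul_nonneg l2.le (sub_nonneg.2 s3)
    have t3 := mul_nonneg l3.le (sub_nonneg.2 s4)
    have := add_nonneg (add_nonneg t1 t4) (add_nonneg t2 t3)
    refine this.trans_eq ?_
    rw [hζ, hν]
    rw [hZ] at e1 e2 ⊢
    linear_combination 4 * x * e1 + 4 * y * e2
  have hlt : ‖z' - z‖ ^ 2 < (Z' - Z) ^ 2 := by linarith
  rcases le_total 0 (Z' - Z) with hs | hs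
  · have h5 : ‖z' - z‖ < Z' - Z := lt_of_pow_lt_pow_left₀ 2 hs hlt
    have h6 : ‖z - (m₁ - m₂)‖ ≤ 1 - Z + (w₁ - w₂) := by
      have : ‖z - (m₁ - m₂)‖ ≤ ‖z' - (m₁ - m₂)‖ + ‖z' - z‖ := by
        rw [show z - (m₁ - m₂) = z' - (m₁ - m₂) - (z' - z) by abel]; exact norm_sub_le _ _
      linarith
    have h7 := pow_le_pow_left₀ (norm_nonneg _) h6 2
    rw [hz, show -(x • m₁ + y • m₂) - (m₁ - m₂) = (0:ℝ) • m₁ + (-x-1) • m₁ + (-y+1) • m₂ by module, nsq] at h7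
    have : 0 ≤ ν := by
      refine (sub_nonneg.2 h7).trans_eq ?_
      rw [hν, ← ha, ← hb, ← hgdef]
      rw [hZ] at e1 e2 ⊢
      linear_combination (-x-2) * e1 + (-y+2) * e2
    linarith
  · have h5 : ‖z' - z‖ < -(Z' - Z) := lt_of_pow_lt_pow_left₀ 2 (by linarith) (by rwa [neg_sq])
    have h6 : ‖z + (m₁ + m₂)‖ ≤ 1 + Z + (w₁ + w₂) := by
      have : ‖z + (m₁ + m₂)‖ ≤ ‖z' + (m₁ + m₂)‖ + ‖z' - z‖ := by
        rw [show z + (m₁ + m₂) = z' + (m₁ + m₂) - (z' - z) by abel]; exact norm_sub_le _ _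
      linarith
    have h7 := pow_le_pow_left₀ (norm_nonneg _) h6 2
    rw [hz, show -(x • m₁ + y • m₂) + (m₁ + m₂) = (0:ℝ) • m₁ + (-x+1) • m₁ + (-y+1) • m₂ by module, nsq] at h7
    have : 0 ≤ ν := by
      refine (sub_nonneg.2 h7).trans_eq ?_
      rw [hν, ← ha, ← hb, ← hgdef]
      rw [hZ] at e1 e2 ⊢
      linear_combination (-x+2) * e1 + (-y+2) * e2
    linarith

lemma norm_two (m : V3) : ‖(2:ℝ) • m‖ = 2 * ‖m‖ := by simp [norm_smul]

lemma feas_swap {w₁ w₂ : ℝ} {m₁ m₂ : V3} (h : Feas w₁ w₂ m₁ m₂) : Feas w₂ w₁ m₂ m₁ := by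
  obtain ⟨Z, z, h1, h2, h3, h4⟩ := h
  refine ⟨Z, z, ?_, ?_, ?_, ?_⟩
  · rw [add_comm m₂]; linarith
  · rw [add_comm m₂]; linarith
  · rw [show z - (m₂ - m₁) = z + (m₁ - m₂) by abel]; linarith
  · rw [show z + (m₂ - m₁) = z - (m₁ - m₂) by abel]; linarith

lemma feas_comp (w₁ w₂ : ℝ) (m₁ m₂ : V3) (b₁ : ‖m₁‖ ≤ 1 - |w₁|) (b₂ : ‖m₂‖ ≤ 1 - |w₂|)
    (h : ‖m₁ + m₂‖ ≤ |w₁ + w₂| ∨ ‖m₁ - m₂‖ ≤ |w₁ - w₂|) : Feas w₁ w₂ m₁ m₂ := by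
  have := le_abs_self w₁
  have := neg_le_abs w₁
  have := le_abs_self w₂
  have := neg_le_abs w₂
  have N2 : ∀ v m : V3, v = (2:ℝ) • m → ‖v‖ = 2 * ‖m‖ := fun v m h => by rw [h, norm_two]
  have N2' : ∀ v m : V3, v = (-2:ℝ) • m → ‖v‖ = 2 * ‖m‖ := fun v m h => by simp [h, norm_smul]
  have N0 : ∀ v : V3, v = 0 → ‖v‖ = 0 := fun v h => by simp [h]
  rcases h with h | h
  · rcases le_total 0 (w₁ + w₂) with hs | hs
    · rw [abs_of_nonneg hs] at h
      refine ⟨(w₁ + w₂) - 1, m₁ + m₂, ?_, ?_, ?_, ?_⟩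
      · rw [N2 _ (m₁ + m₂) (by module)]; linarith
      · rw [N0 _ (by module)]; linarith
      · rw [N2 _ m₂ (by module)]; linarith
      · rw [N2 _ m₁ (by module)]; linarith
    · rw [abs_of_nonpos hs] at h
      refine ⟨-(w₁ + w₂) - 1, -(m₁ + m₂), ?_, ?_, ?_, ?_⟩
      · rw [N0 _ (by module)]; linarith
      · rw [N2' _ (m₁ + m₂) (by module)]; linarith
      · rw [N2' _ m₁ (by module)]; linarith
      · rw [N2' _ m₂ (by module)]; linarith
  · rcases le_total 0 (w₁ - w₂) with hs | hs
    · rw [abs_of_nonneg hs] at h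
      refine ⟨1 - (w₁ - w₂), -(m₁ - m₂), ?_, ?_, ?_, ?_⟩
      · rw [N2 _ m₂ (by module)]; linarith
      · rw [N2' _ m₁ (by module)]; linarith
      · rw [N2' _ (m₁ - m₂) (by module)]; linarith
      · rw [N0 _ (by module)]; linarith
    · rw [abs_of_nonpos hs] at h
      refine ⟨1 + (w₁ - w₂), m₁ - m₂, ?_, ?_, ?_, ?_⟩
      · rw [N2 _ m₁ (by module)]; linarith
      · rw [N2' _ m₂ (by module)]; linarith
      · rw [N0 _ (by module)]; linarith
      · rw [N2 _ (m₁ - m₂) (by module)]; linarith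

lemma norm_comb (s c B C : ℝ) (v m u : V3) (hs : 0 ≤ s) (hs1 : s ≤ 1) (hc : |c| ≤ C) (hv : ‖v‖ ≤ B)
    (t : ℝ) (hm : ‖m‖ ≤ t) (hu : u = s • v + (1 - s) • c • m) : ‖u‖ ≤ s * B + (1 - s) * (C * t) := by
  rw [hu]
  refine (norm_add_le _ _).trans ?_
  rw [norm_smul, norm_smul, norm_smul, Real.norm_of_nonneg hs, Real.norm_of_nonneg (by linarith : 0 ≤ 1 - s),
    Real.norm_eq_abs]
  have h1 := mul_le_mul_of_nonneg_left hv hs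
  have h2 : |c| * ‖m‖ ≤ C * t := mul_le_mul hc hm (norm_nonneg _) ((abs_nonneg c).trans hc)
  have h3 := mul_le_mul_of_nonneg_left h2 (by linarith : 0 ≤ 1 - s)
  linarith

lemma feas_mix {w₁ w₂ : ℝ} {m₁ m₂ : V3} (h : Feas w₁ w₂ m₁ m₂) (s : ℝ) (hs : 0 ≤ s) (hs1 : s ≤ 1)
    (b₁ : ‖m₁‖ ≤ 1 - |w₁|) (b₂ : |w₂| ≤ 1) : Feas w₁ w₂ m₁ (s • m₂) := by
  obtain ⟨Z, z, h1, h2, h3, h4⟩ := h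
  have := le_abs_self w₁
  have := neg_le_abs w₁
  obtain ⟨v1, v2⟩ := abs_le.1 b₂
  have c1 : |1 + w₂| ≤ 1 + w₂ := by rw [abs_of_nonneg]; linarith
  have c2 : |1 - w₂| ≤ 1 - w₂ := by rw [abs_of_nonneg]; linarith
  have c3 : |w₂ - 1| ≤ 1 - w₂ := by rw [abs_of_nonpos] <;> linarith
  have c4 : |-1 - w₂| ≤ 1 + w₂ := by rw [abs_of_nonpos] <;> linarith
  refine ⟨s * Z + (1 - s) * (w₁ * w₂), s • z + (1 - s) • (w₂ • m₁), ?_, ?_, ?_, ?_⟩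
  · refine (norm_comb s (1 + w₂) _ (1 + w₂) _ m₁ _ hs hs1 c1 h1 (1 + w₁) (by linarith) ?_).trans_eq ?_
    · module
    · ring
  · refine (norm_comb s (w₂ - 1) _ (1 - w₂) _ m₁ _ hs hs1 c3 h2 (1 - w₁) (by linarith) ?_).trans_eq ?_
    · module
    · ring
  · refine (norm_comb s (w₂ - 1) _ (1 - w₂) _ m₁ _ hs hs1 c3 h3 (1 + w₁) (by linarith) ?_).trans_eq ?_
    · module
    · ring
  · refine (norm_comb s (1 + w₂) _ (1 + w₂) _ m₁ _ hs hs1 c1 h4 (1 - w₁) (by linarith) ?_).trans_eq ?_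
    · module
    · ring

lemma feas_zero {w₁ w₂ : ℝ} {m₁ : V3}
    (b₁ : ‖m₁‖ ≤ 1 - |w₁|) (b₂ : |w₂| ≤ 1) : Feas w₁ w₂ m₁ 0 := by
  have := le_abs_self w₁
  have := neg_le_abs w₁
  obtain ⟨v1, v2⟩ := abs_le.1 b₂
  have A : ∀ (c C t : ℝ) (u : V3), u = c • m₁ → |c| ≤ C → ‖m₁‖ ≤ t → ‖u‖ ≤ C * t := by
    intro c C t u hu hc ht
    rw [hu, norm_smul, Real.norm_eq_abs]
    exact mul_le_mul hc ht (norm_nonneg _) ((abs_nonneg c).trans hc)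
  have c1 : |1 + w₂| ≤ 1 + w₂ := by rw [abs_of_nonneg]; linarith
  have c3 : |w₂ - 1| ≤ 1 - w₂ := by rw [abs_of_nonpos] <;> linarith
  refine ⟨w₁ * w₂, w₂ • m₁, ?_, ?_, ?_, ?_⟩
  · exact (A (1 + w₂) _ (1 + w₁) _ (by module) c1 (by linarith)).trans_eq (by ring)
  · exact (A (w₂ - 1) _ (1 - w₁) _ (by module) c3 (by linarith)).trans_eq (by ring)
  · exact (A (w₂ - 1) _ (1 + w₁) _ (by module) c3 (by linarith)).trans_eq (by ring)
  · exact (A (1 + w₂) _ (1 - w₁) _ (by module) c1 (by linarith)).trans_eq (by ring)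

lemma pair_le (z M : V3) (t s : ℝ) (ht : 0 < t) (h1 : ‖z + M‖ ^ 2 ≤ (t + s) ^ 2)
    (h2 : ‖z - M‖ ^ 2 ≤ (t - s) ^ 2) (hM : |s| < ‖M‖) : ‖z + M‖ ≤ t + s ∧ ‖z - M‖ ≤ t - s := by
  have k1 := abs_le_of_sq_le_sq' h1
  have tri : 2 * ‖M‖ ≤ ‖z + M‖ + ‖z - M‖ := by
    rw [← norm_two, show (2:ℝ) • M = (z + M) - (z - M) by module]; exact norm_sub_le _ _
  have a1 : ‖z + M‖ ≤ |t + s| := by rw [← abs_norm]; exact sq_le_sq.1 h1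
  have a2 : ‖z - M‖ ≤ |t - s| := by rw [← abs_norm (z - M)]; exact sq_le_sq.1 h2
  have := le_abs_self s
  have := neg_le_abs s
  rcases abs_cases (t + s) with ⟨e, f⟩ | ⟨e, f⟩ <;> rcases abs_cases (t - s) with ⟨e', f'⟩ | ⟨e', f'⟩ <;>
    constructor <;> linarith

lemma feas_good (w₁ w₂ : ℝ) (m₁ m₂ : V3) (n₁ n₂ p₁ p₂ q₁ q₂ : ℝ)
    (hp₁ : p₁ ^ 2 = (1 + w₁) ^ 2 - ‖m₁‖ ^ 2) (hp₂ : p₂ ^ 2 = (1 + w₂) ^ 2 - ‖m₂‖ ^ 2)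
    (hq₁ : q₁ ^ 2 = (1 - w₁) ^ 2 - ‖m₁‖ ^ 2) (hq₂ : q₂ ^ 2 = (1 - w₂) ^ 2 - ‖m₂‖ ^ 2)
    (hn₁ : n₁ = ‖m₁‖ ^ 2 + ‖m₂‖ ^ 2 - 2 * ⟪m₁, m₂⟫ - (w₁ - w₂) ^ 2)
    (hn₂ : n₂ = ‖m₁‖ ^ 2 + ‖m₂‖ ^ 2 + 2 * ⟪m₁, m₂⟫ - (w₁ + w₂) ^ 2)
    (b₁ : ‖m₁‖ ≤ 1 - |w₁|) (b₂ : ‖m₂‖ ≤ 1 - |w₂|)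
    (hdet : 0 < ‖m₁‖ ^ 2 * ‖m₂‖ ^ 2 - ⟪m₁, m₂⟫ ^ 2)
    (hK : n₁ * n₂ ≤ (p₁ * q₁ + p₂ * q₂) ^ 2) (hK' : (p₁ * q₁ - p₂ * q₂) ^ 2 ≤ n₁ * n₂) :
    Feas w₁ w₂ m₁ m₂ := by
  by_cases hc : ‖m₁ + m₂‖ ≤ |w₁ + w₂| ∨ ‖m₁ - m₂‖ ≤ |w₁ - w₂|
  · exact feas_comp _ _ _ _ b₁ b₂ hc
  push Not at hc
  obtain ⟨c1, c2⟩ := hc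
  have sq1 : (w₁ + w₂) ^ 2 < ‖m₁ + m₂‖ ^ 2 := by rw [← sq_abs (w₁ + w₂)]; exact pow_lt_pow_left₀ c1 (abs_nonneg _) two_ne_zero
  have sq2 : (w₁ - w₂) ^ 2 < ‖m₁ - m₂‖ ^ 2 := by rw [← sq_abs (w₁ - w₂)]; exact pow_lt_pow_left₀ c2 (abs_nonneg _) two_ne_zero
  rw [norm_add_sq_real] at sq1
  rw [norm_sub_sq_real] at sq2
  have A1 : ‖m₁‖ ^ 2 ≤ 1 - 2 * |w₁| + w₁ ^ 2 := by
    have := pow_le_pow_left₀ (norm_nonneg _) b₁ 2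
    rw [← sq_abs w₁]; linarith
  have A2 : ‖m₂‖ ^ 2 ≤ 1 - 2 * |w₂| + w₂ ^ 2 := by
    have := pow_le_pow_left₀ (norm_nonneg _) b₂ 2
    rw [← sq_abs w₂]; linarith
  have n1 := abs_nonneg w₁
  have n2 := abs_nonneg w₂
  obtain ⟨x, hx⟩ : ∃ x, (‖m₁‖ ^ 2 * ‖m₂‖ ^ 2 - ⟪m₁, m₂⟫ ^ 2) * x =
      -(w₂ + (⟪m₁, m₂⟫ - w₁ * w₂) * w₁) * ‖m₂‖ ^ 2 + (w₁ + (⟪m₁, m₂⟫ - w₁ * w₂) * w₂) * ⟪m₁, m₂⟫ :=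
    ⟨_, mul_div_cancel₀ _ hdet.ne'⟩
  obtain ⟨y, hy⟩ : ∃ y, (‖m₁‖ ^ 2 * ‖m₂‖ ^ 2 - ⟪m₁, m₂⟫ ^ 2) * y =
      -(w₁ + (⟪m₁, m₂⟫ - w₁ * w₂) * w₂) * ‖m₁‖ ^ 2 + (w₂ + (⟪m₁, m₂⟫ - w₁ * w₂) * w₁) * ⟪m₁, m₂⟫ :=
    ⟨_, mul_div_cancel₀ _ hdet.ne'⟩
  have hid := nu_id w₁ w₂ _ _ _ n₁ n₂ p₁ p₂ q₁ q₂ x y hp₁ hp₂ hq₁ hq₂ hn₁ hn₂ hx hy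
  have hpr := mul_nonneg (sub_nonneg.2 hK) (sub_nonneg.2 hK')
  obtain ⟨Z, hZ⟩ : ∃ Z, ⟪m₁, m₂⟫ = Z + w₁ * w₂ := ⟨⟪m₁, m₂⟫ - w₁ * w₂, by ring⟩
  have t1 : 0 < 1 + Z := by linarith
  have t2 : 0 < 1 - Z := by linarith
  have N1 := fun c d => nsq 0 c d m₁ m₁ m₂
  generalize ‖m₁‖ ^ 2 = a at *
  generalize ‖m₂‖ ^ 2 = b at *
  generalize ⟪m₁, m₂⟫ = g at *
  have e1 : a * x + g * y + w₂ + (g - w₁ * w₂) * w₁ = 0 := by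
    apply mul_left_cancel₀ hdet.ne'
    linear_combination a * hx + g * hy
  have e2 : g * x + b * y + w₁ + (g - w₁ * w₂) * w₂ = 0 := by
    apply mul_left_cancel₀ hdet.ne'
    linear_combination g * hx + b * hy
  have hν : 0 ≤ 1 + (g - w₁ * w₂) ^ 2 + w₁ ^ 2 + w₂ ^ 2 - a - b
      + x * (w₂ + (g - w₁ * w₂) * w₁) + y * (w₁ + (g - w₁ * w₂) * w₂) := by
    refine nonneg_of_mul_nonneg_left (b := a * b - g ^ 2) ?_ hdet
    linarith
  subst hZ
  have P := pair_le (-(x • m₁ + y • m₂)) (m₁ + m₂) (1 + Z) (w₁ + w₂) t1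
    (by
      rw [show -(x • m₁ + y • m₂) + (m₁ + m₂) = (0:ℝ) • m₁ + (-x+1) • m₁ + (-y+1) • m₂ by module, N1]
      refine sub_nonneg.1 (hν.trans_eq ?_)
      linear_combination (x-2) * e1 + (y-2) * e2)
    (by
      rw [show -(x • m₁ + y • m₂) - (m₁ + m₂) = (0:ℝ) • m₁ + (-x-1) • m₁ + (-y-1) • m₂ by module, N1]
      refine sub_nonneg.1 (hν.trans_eq ?_)
      linear_combination (x+2) * e1 + (y+2) * e2) c1
  have P' := pair_le (-(x • m₁ + y • m₂)) (m₁ - m₂) (1 - Z) (-(w₁ - w₂)) t2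
    (by
      rw [show -(x • m₁ + y • m₂) + (m₁ - m₂) = (0:ℝ) • m₁ + (-x+1) • m₁ + (-y-1) • m₂ by module, N1]
      refine sub_nonneg.1 (hν.trans_eq ?_)
      linear_combination (x-2) * e1 + (y+2) * e2)
    (by
      rw [show -(x • m₁ + y • m₂) - (m₁ - m₂) = (0:ℝ) • m₁ + (-x-1) • m₁ + (-y+1) • m₂ by module, N1]
      refine sub_nonneg.1 (hν.trans_eq ?_)
      linear_combination (x+2) * e1 + (y-2) * e2) (by rwa [abs_neg])
  exact ⟨Z, -(x • m₁ + y • m₂), P.1, P.2, by linarith [P'.2], by linarith [P'.1]⟩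

def pP (w : ℝ) (m : V3) : ℝ := √((1 + w) ^ 2 - ‖m‖ ^ 2)
def pQ (w : ℝ) (m : V3) : ℝ := √((1 - w) ^ 2 - ‖m‖ ^ 2)
def N1 (w₁ w₂ : ℝ) (m₁ m₂ : V3) : ℝ := ‖m₁‖ ^ 2 + ‖m₂‖ ^ 2 - 2 * ⟪m₁, m₂⟫ - (w₁ - w₂) ^ 2
def N2 (w₁ w₂ : ℝ) (m₁ m₂ : V3) : ℝ := ‖m₁‖ ^ 2 + ‖m₂‖ ^ 2 + 2 * ⟪m₁, m₂⟫ - (w₁ + w₂) ^ 2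

lemma pP_sq {w : ℝ} {m : V3} (b : ‖m‖ ≤ 1 - |w|) : pP w m ^ 2 = (1 + w) ^ 2 - ‖m‖ ^ 2 := by
  apply Real.sq_sqrt
  have := neg_le_abs w
  have := pow_le_pow_left₀ (norm_nonneg _) (show ‖m‖ ≤ 1 + w by linarith) 2
  linarith

lemma pQ_sq {w : ℝ} {m : V3} (b : ‖m‖ ≤ 1 - |w|) : pQ w m ^ 2 = (1 - w) ^ 2 - ‖m‖ ^ 2 := by
  apply Real.sq_sqrt
  have := le_abs_self w
  have := pow_le_pow_left₀ (norm_nonneg _) (show ‖m‖ ≤ 1 - w by linarith) 2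
  linarith

lemma pR_zero {w : ℝ} {m : V3} (b : ‖m‖ = 1 - |w|) : pP w m * pQ w m = 0 := by
  rcases abs_cases w with ⟨e, _⟩ | ⟨e, _⟩
  · have : pQ w m = 0 := by unfold pQ; rw [b, e]; simp
    rw [this, mul_zero]
  · have : pP w m = 0 := by unfold pP; rw [b, e]; simp
    rw [this, zero_mul]

lemma noncomp {w₁ w₂ : ℝ} {m₁ m₂ : V3} (h : ¬ (‖m₁ + m₂‖ ≤ |w₁ + w₂| ∨ ‖m₁ - m₂‖ ≤ |w₁ - w₂|)) :
    0 < N1 w₁ w₂ m₁ m₂ ∧ 0 < N2 w₁ w₂ m₁ m₂ := by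
  push Not at h
  obtain ⟨c1, c2⟩ := h
  have sq1 : (w₁ + w₂) ^ 2 < ‖m₁ + m₂‖ ^ 2 := by rw [← sq_abs (w₁ + w₂)]; exact pow_lt_pow_left₀ c1 (abs_nonneg _) two_ne_zero
  have sq2 : (w₁ - w₂) ^ 2 < ‖m₁ - m₂‖ ^ 2 := by rw [← sq_abs (w₁ - w₂)]; exact pow_lt_pow_left₀ c2 (abs_nonneg _) two_ne_zero
  rw [norm_add_sq_real] at sq1
  rw [norm_sub_sq_real] at sq2
  unfold N1 N2
  constructor <;> linarith

lemma end_det {w₁ w₂ : ℝ} {m₁ m₂ : V3} (b₁ : ‖m₁‖ = 1 - |w₁|) (b₂ : ‖m₂‖ = 1 - |w₂|)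
    (h1 : 0 < N1 w₁ w₂ m₁ m₂) (h2 : 0 < N2 w₁ w₂ m₁ m₂) :
    0 < ‖m₁‖ ^ 2 * ‖m₂‖ ^ 2 - ⟪m₁, m₂⟫ ^ 2 := by
  have l1 : ⟪m₁, m₂⟫ < ‖m₁‖ * ‖m₂‖ := by
    unfold N1 at h1
    rw [b₁, b₂] at *
    have e1 := sq_abs w₁
    have e2 := sq_abs w₂
    have e3 := le_abs_self (w₁ * w₂)
    rw [abs_mul] at e3
    linarith
  have l2 : -(‖m₁‖ * ‖m₂‖) < ⟪m₁, m₂⟫ := by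
    unfold N2 at h2
    rw [b₁, b₂] at *
    have e1 := sq_abs w₁
    have e2 := sq_abs w₂
    have e3 := neg_le_abs (w₁ * w₂)
    rw [abs_mul] at e3
    linarith
  have := mul_pos (sub_pos.2 l1) (sub_pos.2 l2)
  linarith

lemma feas_unscale {w₁ w₂ : ℝ} {m₁ m₂ : V3} (b₁ : ‖m₁‖ ≤ 1 - |w₁|) (b₂ : ‖m₂‖ ≤ 1 - |w₂|)
    (c₁ c₂ : ℝ) (h₁ : 1 ≤ c₁) (h₂ : 1 ≤ c₂) (b₁' : ‖c₁ • m₁‖ ≤ 1 - |w₁|)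
    (h : Feas w₁ w₂ (c₁ • m₁) (c₂ • m₂)) : Feas w₁ w₂ m₁ m₂ := by
  have k1 : |w₁| ≤ 1 := by linarith [norm_nonneg m₁]
  have k2 : |w₂| ≤ 1 := by linarith [norm_nonneg m₂]
  have s1 := feas_mix h c₂⁻¹ (by positivity) (inv_le_one_of_one_le₀ h₂) b₁' k2
  rw [inv_smul_smul₀ (by positivity)] at s1
  have s2 := feas_mix (feas_swap s1) c₁⁻¹ (by positivity) (inv_le_one_of_one_le₀ h₁) b₂ k1
  rw [inv_smul_smul₀ (by positivity)] at s2
  exact feas_swap s2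

lemma sufficiency (w₁ w₂ : ℝ) (m₁ m₂ : V3) (b₁ : ‖m₁‖ ≤ 1 - |w₁|) (b₂ : ‖m₂‖ ≤ 1 - |w₂|)
    (hK : N1 w₁ w₂ m₁ m₂ * N2 w₁ w₂ m₁ m₂ ≤ (pP w₁ m₁ * pQ w₁ m₁ + pP w₂ m₂ * pQ w₂ m₂) ^ 2) :
    Feas w₁ w₂ m₁ m₂ := by
  have k1 : |w₁| ≤ 1 := by linarith [norm_nonneg m₁]
  have k2 : |w₂| ≤ 1 := by linarith [norm_nonneg m₂]
  by_cases z1 : m₁ = 0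
  · subst z1; exact feas_swap (feas_zero b₂ k1)
  by_cases z2 : m₂ = 0
  · subst z2; exact feas_zero b₁ k2
  have p1 : 0 < ‖m₁‖ := norm_pos_iff.2 z1
  have p2 : 0 < ‖m₂‖ := norm_pos_iff.2 z2
  obtain ⟨r₁, hr₁⟩ : ∃ r, r * ‖m₁‖ = 1 - |w₁| := ⟨_, div_mul_cancel₀ _ p1.ne'⟩
  obtain ⟨r₂, hr₂⟩ : ∃ r, r * ‖m₂‖ = 1 - |w₂| := ⟨_, div_mul_cancel₀ _ p2.ne'⟩
  have g1 : 1 ≤ r₁ := by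
    by_contra! hh
    nlinarith
  have g2 : 1 ≤ r₂ := by
    by_contra! hh
    nlinarith
  let c₁ : ℝ → ℝ := fun t => 1 + t * (r₁ - 1)
  let c₂ : ℝ → ℝ := fun t => 1 + t * (r₂ - 1)
  have hc₁ : ∀ t, 0 ≤ t → 1 ≤ c₁ t := fun t ht => by
    have := mul_nonneg ht (sub_nonneg.2 g1); simp only [c₁]; linarith
  have hc₂ : ∀ t, 0 ≤ t → 1 ≤ c₂ t := fun t ht => by
    have := mul_nonneg ht (sub_nonneg.2 g2); simp only [c₂]; linarith
  have nb₁ : ∀ t, 0 ≤ t → t ≤ 1 → ‖c₁ t • m₁‖ ≤ 1 - |w₁| := fun t ht ht1 => by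
    rw [norm_smul, Real.norm_of_nonneg (by linarith [hc₁ t ht]), ← hr₁]
    refine mul_le_mul_of_nonneg_right ?_ p1.le
    have := mul_nonneg (sub_nonneg.2 ht1) (sub_nonneg.2 g1); simp only [c₁]; linarith
  have nb₂ : ∀ t, 0 ≤ t → t ≤ 1 → ‖c₂ t • m₂‖ ≤ 1 - |w₂| := fun t ht ht1 => by
    rw [norm_smul, Real.norm_of_nonneg (by linarith [hc₂ t ht]), ← hr₂]
    refine mul_le_mul_of_nonneg_right ?_ p2.le
    have := mul_nonneg (sub_nonneg.2 ht1) (sub_nonneg.2 g2); simp only [c₂]; linarith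
  have fin : ∀ t, 0 ≤ t → t ≤ 1 → Feas w₁ w₂ (c₁ t • m₁) (c₂ t • m₂) → Feas w₁ w₂ m₁ m₂ :=
    fun t ht ht1 h => feas_unscale b₁ b₂ _ _ (hc₁ t ht) (hc₂ t ht) (nb₁ t ht ht1) h
  by_cases hce : ‖c₁ 1 • m₁ + c₂ 1 • m₂‖ ≤ |w₁ + w₂| ∨ ‖c₁ 1 • m₁ - c₂ 1 • m₂‖ ≤ |w₁ - w₂|
  · exact fin 1 zero_le_one le_rfl (feas_comp _ _ _ _ (nb₁ 1 zero_le_one le_rfl) (nb₂ 1 zero_le_one le_rfl) hce)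
  obtain ⟨h1, h2⟩ := noncomp hce
  have eb₁ : ‖c₁ 1 • m₁‖ = 1 - |w₁| := by
    rw [norm_smul, Real.norm_of_nonneg (by linarith [hc₁ 1 zero_le_one]), ← hr₁]; simp [c₁]
  have eb₂ : ‖c₂ 1 • m₂‖ = 1 - |w₂| := by
    rw [norm_smul, Real.norm_of_nonneg (by linarith [hc₂ 1 zero_le_one]), ← hr₂]; simp [c₂]
  have dsc : ∀ x y : ℝ, ‖x • m₁‖ ^ 2 * ‖y • m₂‖ ^ 2 - ⟪x • m₁, y • m₂⟫ ^ 2 =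
      (x * y) ^ 2 * (‖m₁‖ ^ 2 * ‖m₂‖ ^ 2 - ⟪m₁, m₂⟫ ^ 2) := fun x y => by
    simp only [norm_smul, real_inner_smul_left, real_inner_smul_right, mul_pow, Real.norm_eq_abs, sq_abs]
    ring
  have hdet : 0 < ‖m₁‖ ^ 2 * ‖m₂‖ ^ 2 - ⟪m₁, m₂⟫ ^ 2 := by
    have := end_det eb₁ eb₂ h1 h2
    rw [dsc] at this
    exact pos_of_mul_pos_right this (sq_nonneg _)
  let f : ℝ → ℝ := fun t => (pP w₁ (c₁ t • m₁) * pQ w₁ (c₁ t • m₁) - pP w₂ (c₂ t • m₂) * pQ w₂ (c₂ t • m₂)) ^ 2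
    - N1 w₁ w₂ (c₁ t • m₁) (c₂ t • m₂) * N2 w₁ w₂ (c₁ t • m₁) (c₂ t • m₂)
  have hf : Continuous f := by
    simp only [f, c₁, c₂]
    unfold pP pQ N1 N2
    fun_prop
  by_cases hf0 : f 0 ≤ 0
  · simp only [f, c₁, c₂, zero_mul, add_zero, one_smul] at hf0
    exact feas_good w₁ w₂ m₁ m₂ _ _ _ _ _ _ (pP_sq b₁) (pP_sq b₂) (pQ_sq b₁) (pQ_sq b₂) rfl rfl b₁ b₂ hdet
      hK (by unfold N1 N2 at hf0; linarith)
  have hf1 : f 1 ≤ 0 := by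
    have := mul_pos h1 h2
    simp only [f]
    rw [pR_zero eb₁, pR_zero eb₂]
    linarith
  obtain ⟨t, ⟨ht0, ht1⟩, ht⟩ := intermediate_value_Icc' (zero_le_one (α := ℝ)) hf.continuousOn
    (show (0:ℝ) ∈ Set.Icc (f 1) (f 0) from ⟨hf1, by linarith⟩)
  apply fin t ht0 ht1
  have q1 := nb₁ t ht0 ht1
  have q2 := nb₂ t ht0 ht1
  simp only [f] at ht
  refine feas_good w₁ w₂ _ _ _ _ _ _ _ _ (pP_sq q1) (pP_sq q2) (pQ_sq q1) (pQ_sq q2) rfl rfl q1 q2 ?_ ?_ ?_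
  · rw [dsc]
    have := hc₁ t ht0
    have := hc₂ t ht0
    positivity
  · change N1 w₁ w₂ (c₁ t • m₁) (c₂ t • m₂) * N2 w₁ w₂ (c₁ t • m₁) (c₂ t • m₂) ≤ _
    have hR1 : 0 ≤ pP w₁ (c₁ t • m₁) * pQ w₁ (c₁ t • m₁) := mul_nonneg (Real.sqrt_nonneg _) (Real.sqrt_nonneg _)
    have hR2 : 0 ≤ pP w₂ (c₂ t • m₂) * pQ w₂ (c₂ t • m₂) := mul_nonneg (Real.sqrt_nonneg _) (Real.sqrt_nonneg _)
    have := mul_nonneg hR1 hR2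
    linarith
  · change _ ≤ N1 w₁ w₂ (c₁ t • m₁) (c₂ t • m₂) * N2 w₁ w₂ (c₁ t • m₁) (c₂ t • m₂)
    linarith

lemma feas_iff (w₁ w₂ : ℝ) (m₁ m₂ : V3) (b₁ : ‖m₁‖ ≤ 1 - |w₁|) (b₂ : ‖m₂‖ ≤ 1 - |w₂|) :
    Feas w₁ w₂ m₁ m₂ ↔
    N1 w₁ w₂ m₁ m₂ * N2 w₁ w₂ m₁ m₂ ≤ (pP w₁ m₁ * pQ w₁ m₁ + pP w₂ m₂ * pQ w₂ m₂) ^ 2 := by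
  refine ⟨fun h => ?_, sufficiency w₁ w₂ m₁ m₂ b₁ b₂⟩
  exact necessity w₁ w₂ m₁ m₂ _ _ _ _ _ _ (pP_sq b₁) (pP_sq b₂) (pQ_sq b₁) (pQ_sq b₂) rfl rfl
    (Real.sqrt_nonneg _) (Real.sqrt_nonneg _) (Real.sqrt_nonneg _) (Real.sqrt_nonneg _)
    (by linarith [norm_nonneg m₁]) (by linarith [norm_nonneg m₂]) h

/-- rewriting of the criterion -/
lemma crit_iff (w₁ w₂ a b g p₁ q₁ p₂ q₂ : ℝ)
    (hp₁ : p₁ ^ 2 = (1 + w₁) ^ 2 - a) (hp₂ : p₂ ^ 2 = (1 + w₂) ^ 2 - b)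
    (hq₁ : q₁ ^ 2 = (1 - w₁) ^ 2 - a) (hq₂ : q₂ ^ 2 = (1 - w₂) ^ 2 - b)
    (hF₁ : 0 < (p₁ + q₁) / 2) (hF₂ : 0 < (p₂ + q₂) / 2) :
    (1 - ((p₁ + q₁) / 2) ^ 2 - ((p₂ + q₂) / 2) ^ 2) *
      (1 - w₁ ^ 2 / ((p₁ + q₁) / 2) ^ 2 - w₂ ^ 2 / ((p₂ + q₂) / 2) ^ 2) ≤ (g - w₁ * w₂) ^ 2 ↔
    (a + b - 2 * g - (w₁ - w₂) ^ 2) * (a + b + 2 * g - (w₁ + w₂) ^ 2) ≤ (p₁ * q₁ + p₂ * q₂) ^ 2 := by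
  have e1 : w₁ ^ 2 / ((p₁ + q₁) / 2) ^ 2 = ((p₁ - q₁) / 2) ^ 2 := by
    rw [div_eq_iff (by positivity), ← mul_pow]
    congr 1
    linarith
  have e2 : w₂ ^ 2 / ((p₂ + q₂) / 2) ^ 2 = ((p₂ - q₂) / 2) ^ 2 := by
    rw [div_eq_iff (by positivity), ← mul_pow]
    congr 1
    linarith
  rw [e1, e2]
  have ha : a = 1 + w₁ ^ 2 - (p₁ ^ 2 + q₁ ^ 2) / 2 := by linarith
  have hb : b = 1 + w₂ ^ 2 - (p₂ ^ 2 + q₂ ^ 2) / 2 := by linarith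
  have key : 4 * ((g - w₁ * w₂) ^ 2 - (1 - ((p₁ + q₁) / 2) ^ 2 - ((p₂ + q₂) / 2) ^ 2) *
      (1 - ((p₁ - q₁) / 2) ^ 2 - ((p₂ - q₂) / 2) ^ 2)) = (p₁ * q₁ + p₂ * q₂) ^ 2 -
      (a + b - 2 * g - (w₁ - w₂) ^ 2) * (a + b + 2 * g - (w₁ + w₂) ^ 2) := by
    rw [ha, hb]; ring
  constructor <;> intro h <;> linarith

def eff (t : ℝ) (v : V3) : Mat2 := ((1 : ℂ) / 2) • ((t : ℂ) • (1 : Mat2) + pauliDot v)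

lemma eff_eq (t : ℝ) (v : V3) : eff t v =
    !![((t + v 2 : ℝ) : ℂ) / 2, ((v 0 : ℂ) - Complex.I * v 1) / 2;
       ((v 0 : ℂ) + Complex.I * v 1) / 2, ((t - v 2 : ℝ) : ℂ) / 2] := by
  ext i j
  fin_cases i <;> fin_cases j <;> simp [eff, pauliDot, sigma1, sigma2, sigma3] <;> ring

lemma eff_add (s t : ℝ) (u v : V3) : eff s u + eff t v = eff (s + t) (u + v) := by
  simp only [eff_eq]
  ext i j
  fin_cases i <;> fin_cases j <;> simp <;> ring

lemma eff_one : (1 : Mat2) = eff 2 0 := by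
  simp only [eff_eq]
  ext i j
  fin_cases i <;> fin_cases j <;> simp

lemma eff_biased (w : ℝ) (m : V3) : biasedEffect w m = eff (1 + w) m := rfl

lemma eff_compl (w : ℝ) (m : V3) : 1 - biasedEffect w m = eff (1 - w) (-m) := by
  rw [sub_eq_iff_eq_add, eff_biased, eff_add, eff_one]
  congr 1
  · ring
  · simp

lemma norm_sq3 (v : V3) : ‖v‖ ^ 2 = v 0 ^ 2 + v 1 ^ 2 + v 2 ^ 2 := by
  simp [EuclideanSpace.norm_sq_eq, Fin.sum_univ_three]

lemma eff_herm (t : ℝ) (v : V3) : (eff t v).IsHermitian := by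
  rw [eff_eq]
  ext i j
  fin_cases i <;> fin_cases j <;> simp [Matrix.conjTranspose_apply, Complex.ext_iff]

lemma eff_psd (t : ℝ) (v : V3) : (eff t v).PosSemidef ↔ ‖v‖ ≤ t := by
  constructor
  · intro h
    have h0 := h.diag_nonneg (i := 0)
    have h1 := h.diag_nonneg (i := 1)
    have hd := h.det_nonneg
    rw [eff_eq] at h0 h1 hd
    rw [Matrix.det_fin_two] at hd
    simp [Complex.le_def] at h0 h1 hd
    have t0 : 0 ≤ t := by linarith
    refine (sq_le_sq₀ (norm_nonneg _) t0).1 ?_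
    rw [norm_sq3]
    nlinarith
  · intro h
    have t0 := (norm_nonneg v).trans h
    refine Matrix.PosSemidef.of_dotProduct_mulVec_nonneg (eff_herm t v) fun x => ?_
    have hs := pow_le_pow_left₀ (norm_nonneg _) h 2
    rw [norm_sq3] at hs
    rw [eff_eq]
    simp only [Complex.le_def, Matrix.mulVec, dotProduct, Fin.sum_univ_two]
    simp
    generalize (x 0).re = a
    generalize (x 0).im = b
    generalize (x 1).re = c
    generalize (x 1).im = d
    generalize v 0 = v0 at *
    generalize v 1 = v1 at *
    generalize v 2 = v2 at *
    have key : |v0 * (2 * (a * c + b * d)) + v1 * (2 * (a * d - b * c)) + v2 * (a^2+b^2-c^2-d^2)| ≤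
        t * (a^2+b^2+c^2+d^2) := by
      apply abs_le_of_sq_le_sq _ (by positivity)
      have cs : (v0 * (2 * (a * c + b * d)) + v1 * (2 * (a * d - b * c)) + v2 * (a^2+b^2-c^2-d^2))^2 ≤
        (v0^2+v1^2+v2^2) * (a^2+b^2+c^2+d^2)^2 := by
        have := add_nonneg (add_nonneg (sq_nonneg (v0 * (2 * (a * d - b * c)) - v1 * (2 * (a * c + b * d))))
          (sq_nonneg (v0 * (a^2+b^2-c^2-d^2) - v2 * (2 * (a * c + b * d)))))
          (sq_nonneg (v1 * (a^2+b^2-c^2-d^2) - v2 * (2 * (a * d - b * c))))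
        refine sub_nonneg.1 (this.trans_eq ?_)
        ring
      rw [mul_pow]
      exact cs.trans (mul_le_mul_of_nonneg_right hs (sq_nonneg _))
    have := neg_le_of_abs_le key
    constructor
    · linarith
    · ring

lemma herm_eff (M : Mat2) (h : M.IsHermitian) : ∃ t v, M = eff t v := by
  refine ⟨(M 0 0).re + (M 1 1).re, !₂[2 * (M 0 1).re, -2 * (M 0 1).im, (M 0 0).re - (M 1 1).re], ?_⟩
  have h00 := h.apply 0 0
  have h11 := h.apply 1 1
  have h10 := h.apply 1 0
  simp [Complex.ext_iff] at h00 h11 h10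
  rw [eff_eq]
  ext i j
  fin_cases i <;> fin_cases j <;> simp [Complex.ext_iff] <;> (try constructor) <;> linarith

lemma bound_of (w : ℝ) (m : V3) (h : (biasedEffect w m).PosSemidef)
    (h' : ((1 : Mat2) - biasedEffect w m).PosSemidef) : ‖m‖ ≤ 1 - |w| := by
  rw [eff_biased, eff_psd] at h
  rw [eff_compl, eff_psd, norm_neg] at h'
  rcases abs_cases w with ⟨e, _⟩ | ⟨e, _⟩ <;> linarith

lemma compat_iff (w₁ w₂ : ℝ) (m₁ m₂ : V3) :
    (∃ G : Bool × Bool → Mat2, IsPOVM G ∧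
      (∀ x, G (x, true) + G (x, false) = biasedObs w₁ m₁ x) ∧
      (∀ y, G (true, y) + G (false, y) = biasedObs w₂ m₂ y)) ↔ Feas w₁ w₂ m₁ m₂ := by
  constructor
  · rintro ⟨G, ⟨hpos, -⟩, h1, h2⟩
    obtain ⟨γ, g, hg⟩ := herm_eff _ (hpos (true, true)).isHermitian
    have a1 := h1 true
    have a2 := h2 true
    have a3 := h1 false
    simp only [biasedObs, if_true, Bool.false_eq_true, if_false] at a1 a2 a3
    rw [eff_compl] at a3
    rw [eff_biased] at a1 a2
    have sub : ∀ s t u v, eff s u - eff t v = eff (s - t) (u - v) := fun s t u v => by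
      rw [sub_eq_iff_eq_add, eff_add]; simp
    have e1 : G (true, false) = eff (1 + w₁ - γ) (m₁ - g) := by
      rw [← sub, ← hg, ← a1]; abel
    have e2 : G (false, true) = eff (1 + w₂ - γ) (m₂ - g) := by
      rw [← sub, ← hg, ← a2]; abel
    have e3 : G (false, false) = eff (1 - w₁ - (1 + w₂ - γ)) (-m₁ - (m₂ - g)) := by
      rw [← sub, ← e2, ← a3]; abel
    have p0 := hpos (true, true)
    have p1 := hpos (true, false)
    have p2 := hpos (false, true)
    have p3 := hpos (false, false)
    rw [hg, eff_psd] at p0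
    rw [e1, eff_psd] at p1
    rw [e2, eff_psd] at p2
    rw [e3, eff_psd] at p3
    have D : ∀ v m : V3, v = (2:ℝ) • m → ‖v‖ = 2 * ‖m‖ := fun v m h => by rw [h, norm_two]
    have D' : ∀ v m : V3, v = (-2:ℝ) • m → ‖v‖ = 2 * ‖m‖ := fun v m h => by simp [h, norm_smul]
    refine ⟨2 * γ - 1 - w₁ - w₂, (2:ℝ) • g - m₁ - m₂, ?_, ?_, ?_, ?_⟩
    · rw [D _ g (by module)]; linarith
    · rw [D _ (-m₁ - (m₂ - g)) (by module)]; linarith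
    · rw [D' _ (m₁ - g) (by module)]; linarith
    · rw [D' _ (m₂ - g) (by module)]; linarith
  · rintro ⟨Z, z, f1, f2, f3, f4⟩
    have H : ∀ (c : ℝ) (v u : V3) (t : ℝ), |c| = 1 / 2 → u = c • v → ‖v‖ ≤ t → ‖u‖ ≤ t / 2 := by
      intro c v u t hc hu hv
      rw [hu, norm_smul, Real.norm_eq_abs, hc]; linarith
    let G : Bool × Bool → Mat2 := fun x =>
      match x with
      | (true, true) => eff ((1 + Z + (w₁ + w₂)) / 2) ((1 / 2 : ℝ) • (z + (m₁ + m₂)))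
      | (true, false) => eff ((1 - Z + (w₁ - w₂)) / 2) ((-1 / 2 : ℝ) • (z - (m₁ - m₂)))
      | (false, true) => eff ((1 - Z - (w₁ - w₂)) / 2) ((-1 / 2 : ℝ) • (z + (m₁ - m₂)))
      | (false, false) => eff ((1 + Z - (w₁ + w₂)) / 2) ((1 / 2 : ℝ) • (z - (m₁ + m₂)))
    have cn : |(-1 / 2 : ℝ)| = 1 / 2 := by rw [abs_of_neg] <;> norm_num
    have cp : |(1 / 2 : ℝ)| = 1 / 2 := by rw [abs_of_pos] <;> norm_num
    refine ⟨G, ⟨?_, ?_⟩, ?_, ?_⟩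
    · rintro ⟨_ | _, _ | _⟩
      · exact (eff_psd _ _).2 (H _ _ _ _ cp rfl f2)
      · exact (eff_psd _ _).2 (H _ _ _ _ cn rfl f4)
      · exact (eff_psd _ _).2 (H _ _ _ _ cn rfl f3)
      · exact (eff_psd _ _).2 (H _ _ _ _ cp rfl f1)
    · rw [Fintype.sum_prod_type]
      simp only [Fintype.sum_bool, G]
      rw [eff_add, eff_add, eff_add, eff_one]
      congr 1
      · ring
      · module
    · rintro (_ | _)
      · simp only [biasedObs, G, Bool.false_eq_true, if_false]
        rw [eff_compl, eff_add]
        congr 1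
        · ring
        · module
      · simp only [biasedObs, G, if_true]
        rw [eff_biased, eff_add]
        congr 1
        · ring
        · module
    · rintro (_ | _)
      · simp only [biasedObs, G, Bool.false_eq_true, if_false]
        rw [eff_compl, eff_add]
        congr 1
        · ring
        · module
      · simp only [biasedObs, G, if_true]
        rw [eff_biased, eff_add]
        congr 1
        · ring
        · module

/-- Busch–Schmidt / Stano–Reitzner–Heinosaari / Yu–Liu–Li–Oh criterion: two binary
qubit observables with effects `E_j = (1/2)((1+w_j)I + m_j·σ)` are compatible iff
`(1 − F₁² − F₂²)(1 − w₁²/F₁² − w₂²/F₂²) ≤ (m₁·m₂ − w₁w₂)²`. -/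
theorem binary_qubit_compat_criterion
    (w₁ w₂ : ℝ) (m₁ m₂ : EuclideanSpace ℝ (Fin 3))
    (hE₁ : (biasedEffect w₁ m₁).PosSemidef)
    (hE₁' : ((1 : Mat2) - biasedEffect w₁ m₁).PosSemidef)
    (hE₂ : (biasedEffect w₂ m₂).PosSemidef)
    (hE₂' : ((1 : Mat2) - biasedEffect w₂ m₂).PosSemidef)
    (hF₁ : 0 < Fquant w₁ m₁) (hF₂ : 0 < Fquant w₂ m₂) :
    (∃ G : Bool × Bool → Mat2, IsPOVM G ∧
      (∀ x, G (x, true) + G (x, false) = biasedObs w₁ m₁ x) ∧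
      (∀ y, G (true, y) + G (false, y) = biasedObs w₂ m₂ y)) ↔
    (1 - Fquant w₁ m₁ ^ 2 - Fquant w₂ m₂ ^ 2) *
      (1 - w₁ ^ 2 / Fquant w₁ m₁ ^ 2 - w₂ ^ 2 / Fquant w₂ m₂ ^ 2) ≤
    (⟪m₁, m₂⟫ - w₁ * w₂) ^ 2 := by
  have b₁ := bound_of w₁ m₁ hE₁ hE₁'
  have b₂ := bound_of w₂ m₂ hE₂ hE₂'
  rw [compat_iff, feas_iff w₁ w₂ m₁ m₂ b₁ b₂]
  exact (crit_iff w₁ w₂ _ _ _ _ _ _ _ (pP_sq b₁) (pP_sq b₂) (pQ_sq b₁) (pQ_sq b₂) hF₁ hF₂).symm
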